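/- Let S be an r×r Fourier matrix satisfying the integrality hypothesis. Suppose there is an index j₀ ∈ {1,…,r−1} with degree k_{j₀} ≠ 1 such that k_{j₀} ≤ k_l and k_{j₀} divides k_l for every index l with k_l ≠ 1. Then the number of indices j ∈ {0,…,r−1} with k_j = 1 is a multiple of k_{j₀}. -/

import Mathlib

open Complex Matrix BigOperators

namespace FourierPaper

noncomputable section

/-- A Fourier matrix: symmetric, unitary, positive real 0-th column,
integral structure constants `N_{ijk}`. -/
structure IsFourier {r : ℕ} [NeZero r] (S : Matrix (Fin r) (Fin r) ℂ) : Prop where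
  symm : ∀ i j, S i j = S j i
  unitary : S * S.conjTranspose = 1
  col0_real : ∀ i, (S i 0).im = 0
  col0_pos : ∀ i, 0 < (S i 0).re
  structInt : ∀ i j k : Fin r, ∃ z : ℤ,
    (∑ l, S l i * S l j * (starRingEnd ℂ) (S l k) / S l 0) = (z : ℂ)

/-- The Allen matrix of `S`: `s i j = S i j / S i 0`. -/
def allen {r : ℕ} [NeZero r] (S : Matrix (Fin r) (Fin r) ℂ) : Matrix (Fin r) (Fin r) ℂ :=
  fun i j => S i j / S i 0

/-- The character table (first eigenmatrix): `p i j = s i j * s 0 j`. -/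
def charTable {r : ℕ} [NeZero r] (S : Matrix (Fin r) (Fin r) ℂ) : Matrix (Fin r) (Fin r) ℂ :=
  fun i j => allen S i j * allen S 0 j

/-- The norm `d_i = ∑_j |s i j|²`. -/
def nrm {r : ℕ} [NeZero r] (S : Matrix (Fin r) (Fin r) ℂ) (i : Fin r) : ℝ :=
  ∑ j, Complex.normSq (allen S i j)

/-- The degree `k_j = s_{0j}²` (a positive real, as `s 0 j` is a positive real). -/
def deg {r : ℕ} [NeZero r] (S : Matrix (Fin r) (Fin r) ℂ) (j : Fin r) : ℝ :=
  ((allen S 0 j).re) ^ 2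

/-- The structure constant `N_{ijk}`. -/
def Nstruct {r : ℕ} [NeZero r] (S : Matrix (Fin r) (Fin r) ℂ) (i j k : Fin r) : ℂ :=
  ∑ l, S l i * S l j * (starRingEnd ℂ) (S l k) / S l 0

/-- The structure constant `λ_{ijk}` of the character-table basis. -/
def lam {r : ℕ} [NeZero r] (S : Matrix (Fin r) (Fin r) ℂ) (i j k : Fin r) : ℂ :=
  Nstruct S i j k * allen S 0 i * allen S 0 j / allen S 0 k

/-- `S` has all real entries. -/
def RealMatrix {r : ℕ} (S : Matrix (Fin r) (Fin r) ℂ) : Prop :=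
  ∀ i j, (S i j).im = 0

/-- Integrality hypothesis: every norm `d_i` is a positive integer dividing `d_0`. -/
def IntegralityHyp {r : ℕ} [NeZero r] (S : Matrix (Fin r) (Fin r) ℂ) : Prop :=
  ∃ D : Fin r → ℕ, (∀ i, 0 < D i) ∧ (∀ i, nrm S i = (D i : ℝ)) ∧ (∀ i, D i ∣ D 0)

/-! Unit rows and the symmetry of `S` give `k_j d_j = d_0` for every `j`, while the degrees sum to
`∑ k_j = d_0`. Hence `∑ k_j` is the multiple `k_{j₀} d_{j₀}` of `k_{j₀}`; removing the degrees
different from `1`, all multiples of `k_{j₀}`, leaves the number of degrees equal to `1`. -/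

theorem mem_zmultiples_iff_exists_eq_mul_intCast {R : Type*} [NonAssocRing R] {a x : R} :
    x ∈ AddSubgroup.zmultiples a ↔ ∃ m : ℤ, x = a * m := by
  simp only [AddSubgroup.mem_zmultiples_iff, ← zsmul_eq_mul', eq_comm]

theorem ncard_fiber_nsmul_mem {ι M : Type*} [Fintype ι] [AddCommGroup M] {H : AddSubgroup M}
    {f : ι → M} {c : M} (hsum : ∑ i, f i ∈ H) (hf : ∀ i, f i ≠ c → f i ∈ H) :
    {i | f i = c}.ncard • c ∈ H := by
  classical
  have hrest : ∑ i with f i ≠ c, f i ∈ H :=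
    H.sum_mem fun i hi => hf i (Finset.mem_filter.mp hi).2
  have hfiber : ∑ i with f i = c, f i = {i | f i = c}.ncard • c := by
    rw [Finset.sum_eq_card_nsmul fun i hi => (Finset.mem_filter.mp hi).2,
      ← Set.ncard_coe_finset, Finset.coe_filter_univ]
  rw [← Finset.sum_filter_add_sum_filter_not _ (f · = c), hfiber] at hsum
  exact (H.add_mem_cancel_right hrest).mp hsum

theorem sum_normSq_row_eq_one {m n : Type*} [DecidableEq m] [Fintype n] {A : Matrix m n ℂ}
    (hA : A * Aᴴ = 1) (i : m) : ∑ j, normSq (A i j) = 1 := by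
  have hii : (A * Aᴴ) i i = 1 := by rw [hA, one_apply_eq]
  rw [mul_apply] at hii
  simp only [conjTranspose_apply, star_def, mul_conj] at hii
  exact_mod_cast hii

section

variable {r : ℕ} [NeZero r] {S : Matrix (Fin r) (Fin r) ℂ}

theorem nrm_eq_sum_normSq_div (i : Fin r) :
    nrm S i = (∑ j, normSq (S i j)) / normSq (S i 0) := by
  simp only [nrm, allen, map_div₀, Finset.sum_div]

theorem deg_eq_normSq_allen {j : Fin r} (hreal : (allen S 0 j).im = 0) :
    deg S j = normSq (allen S 0 j) := by
  rw [deg, normSq_apply, hreal, mul_zero, add_zero, sq]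

theorem sum_deg_eq_nrm_zero (hreal : ∀ j, (allen S 0 j).im = 0) : ∑ j, deg S j = nrm S 0 :=
  Finset.sum_congr rfl fun j _ => deg_eq_normSq_allen (hreal j)

theorem deg_mul_nrm_eq_nrm_zero {j : Fin r} (hreal : (allen S 0 j).im = 0)
    (hrow : ∑ l, normSq (S j l) = ∑ l, normSq (S 0 l)) (hsymm : normSq (S 0 j) = normSq (S j 0))
    (hne : S j 0 ≠ 0) : deg S j * nrm S j = nrm S 0 := by
  have hne' : normSq (S j 0) ≠ 0 := normSq_eq_zero.not.mpr hne
  rw [deg_eq_normSq_allen hreal, nrm_eq_sum_normSq_div, nrm_eq_sum_normSq_div, allen, map_div₀,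
    hsymm, hrow]
  field_simp

theorem apply_zero_ne_zero_of_deg_ne_zero {j : Fin r} (hsymm : normSq (S 0 j) = normSq (S j 0))
    (hdeg : deg S j ≠ 0) : S j 0 ≠ 0 := by
  contrapose! hdeg
  have hrow : S 0 j = 0 := by rwa [hdeg, map_zero, normSq_eq_zero] at hsymm
  rw [deg, allen, hrow, zero_div, zero_re, sq, mul_zero]

end

namespace IsFourier

variable {r : ℕ} [NeZero r] {S : Matrix (Fin r) (Fin r) ℂ}

theorem allen_zero_im (hS : IsFourier S) (j : Fin r) : (allen S 0 j).im = 0 := by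
  simp only [allen, hS.symm 0 j, div_im, hS.col0_real, zero_mul, mul_zero, zero_div, sub_zero]

theorem apply_zero_ne_zero (hS : IsFourier S) (i : Fin r) : S i 0 ≠ 0 :=
  fun h => (hS.col0_pos i).ne' (by rw [h, zero_re])

theorem deg_ne_zero (hS : IsFourier S) (j : Fin r) : deg S j ≠ 0 := by
  rw [deg_eq_normSq_allen (hS.allen_zero_im j), Ne, normSq_eq_zero, allen, hS.symm 0 j]
  exact div_ne_zero (hS.apply_zero_ne_zero j) (hS.apply_zero_ne_zero 0)

theorem sum_normSq_row_eq (hS : IsFourier S) (i j : Fin r) :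
    ∑ l, normSq (S i l) = ∑ l, normSq (S j l) := by
  rw [sum_normSq_row_eq_one hS.unitary, sum_normSq_row_eq_one hS.unitary]

end IsFourier

theorem IntegralityHyp.exists_nrm_eq_intCast {r : ℕ} [NeZero r] {S : Matrix (Fin r) (Fin r) ℂ}
    (hS : IntegralityHyp S) (i : Fin r) : ∃ d : ℤ, nrm S i = d :=
  let ⟨D, _, hD, _⟩ := hS
  ⟨D i, by rw [hD, Int.cast_natCast]⟩

/-- As `x / 0 = 0`, the condition `deg S j₀ ≠ 0` includes `S 0 0 ≠ 0`. -/
theorem stmt6_general {r : ℕ} [NeZero r] (S : Matrix (Fin r) (Fin r) ℂ) (j₀ : Fin r)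
    (hreal : ∀ j, (allen S 0 j).im = 0)
    (hrow : ∑ l, normSq (S j₀ l) = ∑ l, normSq (S 0 l))
    (hsymm : normSq (S 0 j₀) = normSq (S j₀ 0)) (hdeg : deg S j₀ ≠ 0)
    (hnrm : ∃ d : ℤ, nrm S j₀ = d)
    (hdvd : ∀ l, deg S l ≠ 1 → ∃ m : ℤ, deg S l = deg S j₀ * m) :
    ∃ m : ℤ, ({j : Fin r | deg S j = 1}.ncard : ℝ) = deg S j₀ * m := by
  obtain ⟨d, hd⟩ := hnrm
  have hsum : ∑ j, deg S j = deg S j₀ * d := by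
    rw [sum_deg_eq_nrm_zero hreal, ← hd, deg_mul_nrm_eq_nrm_zero (hreal j₀) hrow hsymm
      (apply_zero_ne_zero_of_deg_ne_zero hsymm hdeg)]
  simp only [← mem_zmultiples_iff_exists_eq_mul_intCast] at hdvd ⊢
  rw [← nsmul_one]
  exact ncard_fiber_nsmul_mem (mem_zmultiples_iff_exists_eq_mul_intCast.mpr ⟨d, hsum⟩) hdvd

/-- if `k_{j₀} ≠ 1` is a smallest nontrivial degree dividing all the
nontrivial degrees, then the number of degrees equal to `1` is a multiple of `k_{j₀}`. -/
theorem stmt6 {r : ℕ} [NeZero r] (S : Matrix (Fin r) (Fin r) ℂ)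
    (hS : IsFourier S) (hint : IntegralityHyp S)
    (j₀ : Fin r) (hj₀ : j₀ ≠ 0) (hne : deg S j₀ ≠ 1)
    (hmin : ∀ l : Fin r, deg S l ≠ 1 →
      deg S j₀ ≤ deg S l ∧ ∃ m : ℤ, deg S l = deg S j₀ * (m : ℝ)) :
    ∃ m : ℤ, ({j : Fin r | deg S j = 1}.ncard : ℝ) = deg S j₀ * (m : ℝ) :=
  stmt6_general S j₀ hS.allen_zero_im (hS.sum_normSq_row_eq j₀ 0) (congrArg normSq (hS.symm 0 j₀))
    (hS.deg_ne_zero j₀) (hint.exists_nrm_eq_intCast j₀) fun l hl => (hmin l hl).2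

end

end FourierPaper
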